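/- arXiv:1209.1458 — 3 statements merged into one kernel-verified Lean document; each statement's English description precedes it below -/
import Mathlib

section
/- Let j be a positive integer, B a Banach space, and T a bounded linear operator on B with dense range such that T^j is cyclic. Let z = e^{2πi/j}. Then the operator S = T ⊕ zT ⊕ z²T ⊕ … ⊕ z^{j−1}T acting on B^j (sending (x₀, …, x_{j−1}) to (T x₀, z T x₁, …, z^{j−1} T x_{j−1})) is cyclic. -/
open scoped ENNReal
open Filter

noncomputable section

/-- A bounded linear operator `T` on a normed space is *cyclic* if there is a vector `x`
whose polynomial orbit `span {T^n x : n ≥ 0}` is dense. -/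
def Cyclic {X : Type*} [NormedAddCommGroup X] [NormedSpace ℂ X] (T : X →L[ℂ] X) : Prop :=
  ∃ x : X, Dense (↑(Submodule.span ℂ (Set.range fun n : ℕ => (T ^ n) x)) : Set X)

/-- **Lemma 3.** Let `j ≥ 1`, `T` a bounded linear operator with dense range on a Banach
space `B` such that `T^j` is cyclic, and `z = e^{2πi/j}`. Then the operator
`S = T ⊕ zT ⊕ z²T ⊕ ⋯ ⊕ z^{j−1}T` acting on `B^j` is cyclic. -/
theorem cyclic_direct_sum_of_root_of_unity_multiples
    {B : Type*} [NormedAddCommGroup B] [NormedSpace ℂ B] [CompleteSpace B]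
    (j : ℕ) (hj : 1 ≤ j) (T : B →L[ℂ] B) (hdr : DenseRange T)
    (hcyc : Cyclic (T ^ j)) :
    Cyclic (ContinuousLinearMap.pi fun k : Fin j =>
      ((Complex.exp (2 * Real.pi * Complex.I / j) ^ (k : ℕ)) • T).comp
        (ContinuousLinearMap.proj k)) := by
  have hj0 : j ≠ 0 := by omega
  have hz := Complex.isPrimitiveRoot_exp j hj0
  generalize Complex.exp (2 * Real.pi * Complex.I / j) = z at hz ⊢
  obtain ⟨x, hx⟩ := hcyc
  set S : (Fin j → B) →L[ℂ] (Fin j → B) := ContinuousLinearMap.pi fun k : Fin j =>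
      ((z ^ (k : ℕ)) • T).comp (ContinuousLinearMap.proj k) with hS
  have hSn : ∀ n : ℕ, ∀ v : Fin j → B, ∀ k : Fin j,
      (S ^ n) v k = (z ^ (k : ℕ)) ^ n • (T ^ n) (v k) := by
    intro n
    induction n with
    | zero => intro v k; simp
    | succ n ih =>
      intro v k
      rw [pow_succ, mul_apply_eq_comp, ih, pow_succ T, mul_apply_eq_comp]
      simp [hS, smul_smul, pow_succ]
  refine ⟨fun _ => x, ?_⟩
  set M := Submodule.span ℂ (Set.range fun n : ℕ => (S ^ n) (fun _ => x)) with hM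
  rw [Submodule.dense_iff_topologicalClosure_eq_top] at hx ⊢
  have hMc : IsClosed (M.topologicalClosure : Set (Fin j → B)) :=
    M.isClosed_topologicalClosure
  let L : ℕ → B →L[ℂ] (Fin j → B) := fun r =>
    ContinuousLinearMap.pi fun k : Fin j => ((z ^ (k : ℕ)) ^ r) • ContinuousLinearMap.id ℂ B
  have h1 : ∀ r : ℕ, ∀ y : B, L r ((T ^ r) y) ∈ M.topologicalClosure := by
    intro r y
    have hle : (Submodule.span ℂ (Set.range fun n : ℕ => ((T ^ j) ^ n) x)).topologicalClosure ≤
        M.topologicalClosure.comap ((L r ∘L (T ^ r)) : B →L[ℂ] (Fin j → B)).toLinearMap := by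
      apply Submodule.topologicalClosure_minimal
      · rw [Submodule.span_le]
        rintro _ ⟨m, rfl⟩
        apply M.le_topologicalClosure
        apply Submodule.subset_span
        refine ⟨r + j * m, ?_⟩
        funext k
        have e : (z ^ (k : ℕ)) ^ (j * m) = 1 := by
          rw [← pow_mul, mul_left_comm, pow_mul, hz.pow_eq_one, one_pow]
        simp only [hSn]
        rw [pow_add (z ^ (k : ℕ)), e, mul_one, pow_add T, pow_mul]
        rfl
      · exact hMc.preimage (L r ∘L (T ^ r)).continuous
    rw [hx] at hle
    exact hle (Submodule.mem_top (x := y))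
  have hdr' : ∀ r : ℕ, DenseRange (T ^ r) := by
    intro r
    induction r with
    | zero => exact Function.Surjective.denseRange (fun y => ⟨y, by simp⟩)
    | succ r ih =>
      have := ih.comp hdr (T ^ r).continuous
      rw [pow_succ]
      exact this
  have h2 : ∀ r : ℕ, ∀ w : B, L r w ∈ M.topologicalClosure := by
    intro r w
    exact (hdr' r).induction_on (p := fun w => L r w ∈ M.topologicalClosure) w
      (hMc.preimage (L r).continuous) (h1 r)
  have h3 : ∀ (i : Fin j) (w : B), Pi.single i w ∈ M.topologicalClosure := by
    intro i w
    have hs : ∑ r ∈ Finset.range j, (((z ^ (i : ℕ))⁻¹) ^ r) • L r ((j : ℂ)⁻¹ • w)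
        ∈ M.topologicalClosure :=
      Submodule.sum_mem _ fun r _ => Submodule.smul_mem _ _ (h2 r _)
    have hne : z ^ (i : ℕ) ≠ 0 := pow_ne_zero _ (hz.ne_zero hj0)
    convert hs using 1
    funext k
    have e : (∑ r ∈ Finset.range j, (((z ^ (i : ℕ))⁻¹) ^ r) • L r ((j : ℂ)⁻¹ • w)) k
        = (∑ r ∈ Finset.range j, ((z ^ (i : ℕ))⁻¹ * z ^ (k : ℕ)) ^ r) • ((j : ℂ)⁻¹ • w) := by
      rw [Finset.sum_apply, Finset.sum_smul]
      refine Finset.sum_congr rfl fun r _ => ?_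
      simp only [L, Pi.smul_apply, ContinuousLinearMap.coe_pi', ContinuousLinearMap.smul_apply,
        ContinuousLinearMap.id_apply]
      rw [smul_smul ((z ^ (i : ℕ))⁻¹ ^ r), ← mul_pow]
    rw [e]
    by_cases hik : k = i
    · subst hik
      rw [inv_mul_cancel₀ hne]
      simp [smul_smul, hj0]
    · rw [Pi.single_eq_of_ne hik]
      have hζ : (z ^ (i : ℕ))⁻¹ * z ^ (k : ℕ) ≠ 1 := by
        intro h
        apply hik
        apply Fin.ext
        apply hz.pow_inj k.2 i.2
        exact (inv_mul_eq_one₀ hne).1 h |>.symm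
      have hp : ((z ^ (i : ℕ))⁻¹ * z ^ (k : ℕ)) ^ j = 1 := by
        rw [mul_pow, inv_pow, ← pow_mul, ← pow_mul, mul_comm (i : ℕ), mul_comm (k : ℕ), pow_mul,
          pow_mul, hz.pow_eq_one]
        simp
      rw [geom_sum_eq hζ, hp]
      simp
  rw [eq_top_iff]
  intro v _
  rw [← Finset.univ_sum_single v]
  exact Submodule.sum_mem _ fun i _ => h3 i (v i)
end
end

section
/- Let T be a bounded linear operator on a separable Banach space B. Then the following implications hold among the conditions: (C1) T satisfies the Supercyclicity Criterion, (C2) T is supercyclic, (C3) T is weakly supercyclic, (C4) T ⊕ T is cyclic on B × B, (C5) there exists n ≥ 2 with T^n cyclic, (C6) T^n is cyclic for every n ≥ 1: namely (C1) ⟹ (C4), (C1) ⟹ (C2), (C2) ⟹ (C3), (C3) ⟹ (C6), and (C6) ⟹ (C5). -/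
open scoped ENNReal
open Filter

noncomputable section

/-- `T` is *supercyclic* if the projective orbit `{λ T^n x}` of some vector is dense. -/
def Supercyclic {X : Type*} [NormedAddCommGroup X] [NormedSpace ℂ X] (T : X →L[ℂ] X) : Prop :=
  ∃ x : X, Dense {y : X | ∃ (c : ℂ) (n : ℕ), y = c • (T ^ n) x}

/-- `T` is *weakly supercyclic* if the projective orbit of some vector is dense in the
weak topology. -/
def WeaklySupercyclic {X : Type*} [NormedAddCommGroup X] [NormedSpace ℂ X]
    (T : X →L[ℂ] X) : Prop :=
  ∃ x : X, @Dense (WeakSpace ℂ X) _ {y : X | ∃ (c : ℂ) (n : ℕ), y = c • (T ^ n) x}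

/-- `T` satisfies the *Supercyclicity Criterion*. -/
def SatisfiesSupercyclicityCriterion {X : Type*} [NormedAddCommGroup X] [NormedSpace ℂ X]
    (T : X →L[ℂ] X) : Prop :=
  ∃ (nk : ℕ → ℕ) (E F : Set X) (S : X → X),
    StrictMono nk ∧ (∀ k, 0 < nk k) ∧ Dense E ∧ Dense F ∧
    (∀ y ∈ F, S y ∈ F) ∧ (∀ y ∈ F, T (S y) = y) ∧
    ∀ x ∈ E, ∀ y ∈ F,
      Filter.Tendsto (fun k => ‖(T ^ (nk k)) x‖ * ‖S^[nk k] y‖) Filter.atTop (nhds 0)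

theorem aux_exists_mu {a b ε : ℝ} (ha : 0 ≤ a) (hb : 0 ≤ b) (hε : 0 < ε) (h : a * b < ε * ε) :
    ∃ μ : ℝ, 0 < μ ∧ μ * b < ε ∧ a < ε * μ := by
  rcases hb.eq_or_lt with rfl | hb
  · refine ⟨a / ε + 1, by positivity, by simpa using hε, ?_⟩
    have : ε * (a / ε + 1) = a + ε := by field_simp
    linarith
  · have h1 : a / ε < ε / b := by
      rw [div_lt_div_iff₀ hε hb]; exact h
    obtain ⟨μ, h2, h3⟩ := exists_between h1
    refine ⟨μ, lt_of_le_of_lt (by positivity) h2, (lt_div_iff₀ hb).1 h3, ?_⟩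
    rw [div_lt_iff₀ hε] at h2
    linarith

theorem aux_pow_S {X : Type*} [NormedAddCommGroup X] [NormedSpace ℂ X] (T : X →L[ℂ] X)
    {F : Set X} {S : X → X} (hS : ∀ y ∈ F, S y ∈ F) (hTS : ∀ y ∈ F, T (S y) = y) (n : ℕ) :
    ∀ y ∈ F, (T ^ n) (S^[n] y) = y := by
  induction n with
  | zero => intro y _; simp
  | succ n ih =>
    intro y hy
    rw [Function.iterate_succ_apply, pow_succ']
    change T ((T ^ n) (S^[n] (S y))) = y
    rw [ih _ (hS y hy), hTS y hy]

theorem aux_supercyclic {X : Type*} [NormedAddCommGroup X] [NormedSpace ℂ X] [CompleteSpace X]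
    [TopologicalSpace.SeparableSpace X] (T : X →L[ℂ] X)
    (h : SatisfiesSupercyclicityCriterion T) : Supercyclic T := by
  obtain ⟨nk, E, F, S, -, -, hE, hF, hS, hTS, hlim⟩ := h
  have : SecondCountableTopology X := UniformSpace.secondCountable_of_separable X
  let b := TopologicalSpace.countableBasis X
  have hb : TopologicalSpace.IsTopologicalBasis b := TopologicalSpace.isBasis_countableBasis X
  let G : Set X → Set X := fun V => ⋃ c : ℂ, ⋃ n : ℕ, (fun x => c • (T ^ n) x) ⁻¹' V
  have hG : Dense (⋂ V ∈ b, G V) := by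
    refine dense_biInter_of_isOpen ?_ (TopologicalSpace.countable_countableBasis X) ?_
    · intro V hV
      refine isOpen_iUnion fun c => isOpen_iUnion fun n => (hb.isOpen hV).preimage ?_
      fun_prop
    · intro V hV
      rw [dense_iff_inter_open]
      intro U hU hUne
      obtain ⟨x, hxU, hxE⟩ := hE.inter_open_nonempty U hU hUne
      obtain ⟨y, hyV, hyF⟩ := hF.inter_open_nonempty V (hb.isOpen hV)
        (TopologicalSpace.nonempty_of_mem_countableBasis hV)
      obtain ⟨ε₁, hε₁, h₁⟩ := Metric.isOpen_iff.1 hU x hxU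
      obtain ⟨ε₂, hε₂, h₂⟩ := Metric.isOpen_iff.1 (hb.isOpen hV) y hyV
      have hε : 0 < min ε₁ ε₂ := lt_min hε₁ hε₂
      obtain ⟨k, hk⟩ := ((hlim x hxE y hyF).eventually_lt_const (mul_pos hε hε)).exists
      obtain ⟨μ, hμ, hμ1, hμ2⟩ := aux_exists_mu (norm_nonneg _) (norm_nonneg _) hε hk
      have hμc : (μ : ℂ) ≠ 0 := by exact_mod_cast hμ.ne'
      refine ⟨x + (μ : ℂ) • S^[nk k] y, h₁ ?_, ?_⟩
      · rw [Metric.mem_ball, dist_eq_norm, add_sub_cancel_left, norm_smul, Complex.norm_real,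
          Real.norm_of_nonneg hμ.le]
        exact hμ1.trans_le (min_le_left _ _)
      · refine Set.mem_iUnion.2 ⟨(μ : ℂ)⁻¹, Set.mem_iUnion.2 ⟨nk k, h₂ ?_⟩⟩
        beta_reduce
        rw [map_add, map_smul, aux_pow_S T hS hTS _ y hyF, smul_add, inv_smul_smul₀ hμc,
          Metric.mem_ball, dist_eq_norm, add_sub_cancel_right, norm_smul, norm_inv,
          Complex.norm_real, Real.norm_of_nonneg hμ.le, inv_mul_lt_iff₀ hμ, mul_comm]
        exact hμ2.trans_le (mul_le_mul_of_nonneg_right (min_le_right _ _) hμ.le)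
  obtain ⟨x, hx⟩ := hG.nonempty
  refine ⟨x, hb.dense_iff.2 fun V hV _ => ?_⟩
  obtain ⟨c, hc⟩ := Set.mem_iUnion.1 (Set.mem_iInter₂.1 hx V hV)
  obtain ⟨n, hn⟩ := Set.mem_iUnion.1 hc
  exact ⟨_, hn, c, n, rfl⟩

theorem aux_super_cyclic {X : Type*} [NormedAddCommGroup X] [NormedSpace ℂ X] (T : X →L[ℂ] X)
    (h : Supercyclic T) : Cyclic T := by
  obtain ⟨x, hx⟩ := h
  refine ⟨x, hx.mono ?_⟩
  rintro y ⟨c, n, rfl⟩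
  exact Submodule.smul_mem _ _ (Submodule.subset_span ⟨n, rfl⟩)

theorem aux_prod_pow {X : Type*} [NormedAddCommGroup X] [NormedSpace ℂ X] (T : X →L[ℂ] X)
    (n : ℕ) (p : X × X) : ((T.prodMap T) ^ n) p = ((T ^ n) p.1, (T ^ n) p.2) := by
  induction n with
  | zero => simp
  | succ n ih =>
    rw [pow_succ', pow_succ']
    change (T.prodMap T) (((T.prodMap T) ^ n) p) = _
    rw [ih]; rfl

theorem aux_prod {X : Type*} [NormedAddCommGroup X] [NormedSpace ℂ X] (T : X →L[ℂ] X)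
    (h : SatisfiesSupercyclicityCriterion T) :
    SatisfiesSupercyclicityCriterion (T.prodMap T) := by
  obtain ⟨nk, E, F, S, h1, h2, hE, hF, hS, hTS, hlim⟩ := h
  refine ⟨nk, E ×ˢ E, F ×ˢ F, Prod.map S S, h1, h2, hE.prod hE, hF.prod hF, ?_, ?_, ?_⟩
  · rintro ⟨y, z⟩ ⟨hy, hz⟩
    exact ⟨hS y hy, hS z hz⟩
  · rintro ⟨y, z⟩ ⟨hy, hz⟩
    exact Prod.ext (hTS y hy) (hTS z hz)
  · rintro ⟨x, x'⟩ ⟨hx, hx'⟩ ⟨y, y'⟩ ⟨hy, hy'⟩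
    have hs := ((hlim x hx y hy).add (hlim x hx y' hy')).add
      ((hlim x' hx' y hy).add (hlim x' hx' y' hy'))
    simp only [add_zero] at hs
    refine squeeze_zero (fun k => by positivity) (fun k => ?_) hs
    rw [aux_prod_pow, Prod.map_iterate, Prod.map_apply, Prod.norm_mk, Prod.norm_mk]
    have e1 : max ‖(T ^ nk k) x‖ ‖(T ^ nk k) x'‖ ≤ ‖(T ^ nk k) x‖ + ‖(T ^ nk k) x'‖ :=
      max_le_add_of_nonneg (norm_nonneg _) (norm_nonneg _)
    have e2 : max ‖S^[nk k] y‖ ‖S^[nk k] y'‖ ≤ ‖S^[nk k] y‖ + ‖S^[nk k] y'‖ :=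
      max_le_add_of_nonneg (norm_nonneg _) (norm_nonneg _)
    calc _ ≤ (‖(T ^ nk k) x‖ + ‖(T ^ nk k) x'‖) * (‖S^[nk k] y‖ + ‖S^[nk k] y'‖) := by gcongr
      _ = _ := by ring

theorem aux_weak {X : Type*} [NormedAddCommGroup X] [NormedSpace ℂ X] (T : X →L[ℂ] X)
    (h : Supercyclic T) : WeaklySupercyclic T := by
  obtain ⟨x, hx⟩ := h
  refine ⟨x, ?_⟩
  have := (toWeakSpaceCLM_bijective (𝕜 := ℂ) (E := X)).surjective.denseRange.dense_image
    (toWeakSpaceCLM ℂ X).continuous hx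
  refine this.mono ?_
  rintro _ ⟨y, hy, rfl⟩
  exact hy

theorem aux_weak_cyclic {X : Type*} [NormedAddCommGroup X] [NormedSpace ℂ X] (T : X →L[ℂ] X)
    (h : WeaklySupercyclic T) (n : ℕ) (hn : 1 ≤ n) : Cyclic (T ^ n) := by
  obtain ⟨x, hx⟩ := h
  let N : Fin n → Submodule ℂ X := fun j =>
    Submodule.span ℂ (Set.range fun k : ℕ => ((T ^ n) ^ k) ((T ^ (j : ℕ)) x))
  let M : Fin n → Submodule ℂ X := fun j => (N j).topologicalClosure
  have hM : ∀ j, IsClosed (toWeakSpace ℂ X '' (M j : Set X)) := by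
    intro j
    have hc : Convex ℝ (M j : Set X) := ((M j).restrictScalars ℝ).convex
    have := hc.toWeakSpace_closure ℂ
    rw [(N j).isClosed_topologicalClosure.closure_eq] at this
    rw [this]
    exact isClosed_closure
  have hcov : ⋃ j, (M j : Set X) = Set.univ := by
    have hcl : IsClosed (⋃ j, toWeakSpace ℂ X '' (M j : Set X)) := isClosed_iUnion_of_finite hM
    have hsub : (Set.univ : Set (WeakSpace ℂ X)) ⊆ ⋃ j, toWeakSpace ℂ X '' (M j : Set X) := by
      rw [← hx.closure_eq]
      refine closure_minimal ?_ hcl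
      rintro _ ⟨c, m, rfl⟩
      refine Set.mem_iUnion.2 ⟨⟨m % n, Nat.mod_lt _ hn⟩, c • (T ^ m) x, ?_, rfl⟩
      refine Submodule.le_topologicalClosure _ (Submodule.smul_mem _ _
        (Submodule.subset_span ⟨m / n, ?_⟩))
      change ((T ^ n) ^ (m / n) * T ^ (m % n)) x = _
      rw [← pow_mul, ← pow_add, Nat.div_add_mod]
    refine Set.eq_univ_of_forall fun y => ?_
    obtain ⟨j, z, hz, hzy⟩ := Set.mem_iUnion.1 (hsub (Set.mem_univ (toWeakSpace ℂ X y)))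
    rw [(toWeakSpace ℂ X).injective hzy] at hz
    exact Set.mem_iUnion.2 ⟨j, hz⟩
  obtain ⟨j, hj⟩ := Subspace.exists_eq_top_of_iUnion_eq_univ hcov
  exact ⟨(T ^ (j : ℕ)) x, Submodule.dense_iff_topologicalClosure_eq_top.2 hj⟩

/-- **Proposition 2.** For any bounded linear operator `T` on a separable Banach space
the implications (C1) ⟹ (C4), (C1) ⟹ (C2), (C2) ⟹ (C3), (C3) ⟹ (C6) and
(C6) ⟹ (C5) hold. -/
theorem general_implications
    {B : Type*} [NormedAddCommGroup B] [NormedSpace ℂ B] [CompleteSpace B]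
    [TopologicalSpace.SeparableSpace B] (T : B →L[ℂ] B) :
    (SatisfiesSupercyclicityCriterion T → Cyclic (T.prodMap T)) ∧
    (SatisfiesSupercyclicityCriterion T → Supercyclic T) ∧
    (Supercyclic T → WeaklySupercyclic T) ∧
    (WeaklySupercyclic T → ∀ n : ℕ, 1 ≤ n → Cyclic (T ^ n)) ∧
    ((∀ n : ℕ, 1 ≤ n → Cyclic (T ^ n)) → ∃ n : ℕ, 2 ≤ n ∧ Cyclic (T ^ n)) := by
  exact ⟨fun h => aux_super_cyclic _ (aux_supercyclic _ (aux_prod T h)), aux_supercyclic T,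
    aux_weak T, aux_weak_cyclic T, fun h => ⟨2, le_rfl, h 2 one_le_two⟩⟩
end
end

section
/- Let T be a bounded linear operator on a Banach space B and (f_j)_{j∈ℤ} a bilateral sequence of elements of B such that span{f_j : j ∈ ℤ} is dense in B and T f_j = f_{j+1} for every j ∈ ℤ. Assume that for every positive integer a, inf{ ‖f_{−m}‖ · ‖f_{(m−a)j}‖^{1/j} : j ∈ ℕ, j ≥ 1, m ∈ ℤ, m ≥ a } = 0. Then the set of cyclic vectors for T is dense in B. -/
open scoped ENNReal
open Filter

noncomputable section

/-- `x` is a *cyclic vector* for `T`: `span {T^n x : n ≥ 0}` is dense. -/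
def CyclicVector {X : Type*} [NormedAddCommGroup X] [NormedSpace ℂ X]
    (T : X →L[ℂ] X) (x : X) : Prop :=
  Dense (↑(Submodule.span ℂ (Set.range fun n : ℕ => (T ^ n) x)) : Set X)

open Polynomial in
theorem aux_pow_norm {B : Type*} [NormedAddCommGroup B] [NormedSpace ℂ B]
    (T : B →L[ℂ] B) (n : ℕ) (v : B) : ‖(T ^ n) v‖ ≤ ‖T‖ ^ n * ‖v‖ := by
  induction n with
  | zero => simp
  | succ n ih =>
    rw [pow_succ', pow_succ', ContinuousLinearMap.mul_apply]
    calc _ ≤ ‖T‖ * ‖(T ^ n) v‖ := T.le_opNorm _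
      _ ≤ ‖T‖ * (‖T‖ ^ n * ‖v‖) := by gcongr
      _ = _ := by ring

theorem aux_shift {B : Type*} [NormedAddCommGroup B] [NormedSpace ℂ B]
    (T : B →L[ℂ] B) (f : ℤ → B) (hshift : ∀ j : ℤ, T (f j) = f (j + 1)) (n : ℕ) (j : ℤ) :
    (T ^ n) (f j) = f (j + n) := by
  induction n with
  | zero => simp
  | succ n ih =>
    rw [pow_succ', ContinuousLinearMap.mul_apply, ih, hshift]
    push_cast; congr 1; ring

open Polynomial in
theorem aux_span {B : Type*} [NormedAddCommGroup B] [NormedSpace ℂ B]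
    (T : B →L[ℂ] B) (f : ℤ → B) (hshift : ∀ j : ℤ, T (f j) = f (j + 1)) (y : B)
    (hy : y ∈ Submodule.span ℂ (Set.range f)) :
    ∃ (N : ℕ) (q : ℂ[X]), y = aeval T q (f (-(N : ℤ))) := by
  induction hy using Submodule.span_induction with
  | mem x hx =>
    obtain ⟨j, rfl⟩ := hx
    refine ⟨(-j).toNat, X ^ (j + (-j).toNat).toNat, ?_⟩
    rw [map_pow, aeval_X, aux_shift T f hshift]
    congr 1; omega
  | zero => exact ⟨0, 0, by simp⟩
  | add x y _ _ hx hy =>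
    obtain ⟨N, q, rfl⟩ := hx
    obtain ⟨M, p, rfl⟩ := hy
    refine ⟨N + M, q * X ^ M + p * X ^ N, ?_⟩
    rw [map_add, ContinuousLinearMap.add_apply, map_mul, map_mul, map_pow, map_pow, aeval_X,
      ContinuousLinearMap.mul_apply, ContinuousLinearMap.mul_apply,
      aux_shift T f hshift, aux_shift T f hshift]
    congr 3 <;> (push_cast; ring)
  | smul a x _ hx =>
    obtain ⟨N, q, rfl⟩ := hx
    exact ⟨N, a • q, by rw [map_smul, ContinuousLinearMap.smul_apply]⟩

open Polynomial in
theorem aux_aeval_mem {B : Type*} [NormedAddCommGroup B] [NormedSpace ℂ B]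
    (T : B →L[ℂ] B) (p : ℂ[X]) (x : B) :
    aeval T p x ∈ Submodule.span ℂ (Set.range fun n : ℕ => (T ^ n) x) := by
  induction p using Polynomial.induction_on' with
  | add p q hp hq =>
    rw [map_add, ContinuousLinearMap.add_apply]; exact add_mem hp hq
  | monomial n a =>
    rw [← C_mul_X_pow_eq_monomial, ← smul_eq_C_mul, map_smul, map_pow, aeval_X,
      ContinuousLinearMap.smul_apply]
    exact Submodule.smul_mem _ _ (Submodule.subset_span ⟨n, rfl⟩)

open Polynomial in
theorem aux_key {B : Type*} [NormedAddCommGroup B] [NormedSpace ℂ B]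
    (T : B →L[ℂ] B) (f : ℤ → B)
    (hshift : ∀ j : ℤ, T (f j) = f (j + 1))
    (hinf : ∀ a : ℕ, 1 ≤ a →
      sInf {x : ℝ | ∃ (j : ℕ) (m : ℤ), 1 ≤ j ∧ (a : ℤ) ≤ m ∧
        x = ‖f (-m)‖ * ‖f ((m - a) * j)‖ ^ ((j : ℝ)⁻¹)} = 0)
    (q : ℂ[X]) (N k : ℕ) (ε η : ℝ) (hε : 0 < ε) (hη : 0 < η) :
    ∃ (x : B) (p : ℂ[X]), ‖x - aeval T q (f (-(N : ℤ)))‖ ≤ ε ∧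
      ‖aeval T p x - f (-(k : ℤ))‖ < η := by
  set K : ℝ := ‖aeval T q‖ * (‖T‖ + 1) ^ (k + 1) with hK
  have hK0 : 0 ≤ K := by positivity
  set δ : ℝ := ε * min η 1 / (2 * (K + 1)) with hδ
  have hmin : 0 < min η 1 := lt_min hη one_pos
  have hδ0 : 0 < δ := by positivity
  have hne : {x : ℝ | ∃ (j : ℕ) (m : ℤ), 1 ≤ j ∧ ((N + k + 1 : ℕ) : ℤ) ≤ m ∧
        x = ‖f (-m)‖ * ‖f ((m - (N + k + 1 : ℕ)) * j)‖ ^ ((j : ℝ)⁻¹)}.Nonempty :=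
    ⟨_, 1, _, le_rfl, le_rfl, rfl⟩
  obtain ⟨_, ⟨j, m, hj, hm, rfl⟩, hlt⟩ := exists_lt_of_csInf_lt hne
    (by rw [hinf (N + k + 1) (by omega)]; exact hδ0)
  obtain ⟨r, hr⟩ := Int.le.dest hm
  have hmr : (m - (N + k + 1 : ℕ)) * j = ((r * j : ℕ) : ℤ) := by
    rw [← hr]; push_cast; ring
  rw [hmr] at hlt
  by_cases hG : f (-m) = 0
  · refine ⟨aeval T q (f (-(N : ℤ))), 0, by simpa using hε.le, ?_⟩
    have : f (-(k : ℤ)) = 0 := by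
      have := aux_shift T f hshift (N + r + 1) (-m)
      rw [hG, map_zero] at this
      rw [this]; congr 1; rw [← hr]; push_cast; ring
    simpa [this] using hη
  have hG0 : 0 < ‖f (-m)‖ := norm_pos_iff.mpr hG
  set G := ‖f (-m)‖ with hGdef
  set F := ‖f ((r * j : ℕ) : ℤ)‖ with hF
  set c : ℂ := ((ε / G : ℝ) : ℂ) with hc
  have hcn : ‖c‖ = ε / G := by
    rw [hc, Complex.norm_real, Real.norm_of_nonneg (by positivity)]
  have hc0 : c ≠ 0 := by
    rw [← norm_pos_iff, hcn]; positivity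
  set e : ℂ[X] := C (-c⁻¹) * q * X ^ (r + k + 1) with he
  have hCC : (C c⁻¹ : ℂ[X]) * C c = 1 := by rw [← C_mul, inv_mul_cancel₀ hc0, C_1]
  have hx : aeval T (C c * (1 - e)) (f (-m)) = aeval T q (f (-(N : ℤ))) + c • f (-m) := by
    have : C c * (1 - e) = q * X ^ (r + k + 1) + C c := by
      rw [he, C_neg]; linear_combination q * X ^ (r + k + 1) * hCC
    rw [this, map_add, map_mul, map_pow, aeval_X, ContinuousLinearMap.add_apply,
      ContinuousLinearMap.mul_apply, aux_shift T f hshift, aeval_C,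
      Algebra.algebraMap_eq_smul_one, ContinuousLinearMap.smul_apply,
      ContinuousLinearMap.one_apply]
    congr 3; rw [← hr]; push_cast; ring
  refine ⟨aeval T (C c * (1 - e)) (f (-m)),
    X ^ (N + r + 1) * C c⁻¹ * ∑ i ∈ Finset.range j, e ^ i, ?_, ?_⟩
  · rw [hx, add_sub_cancel_left, norm_smul, hcn, ← hGdef, div_mul_cancel₀ _ hG0.ne']
  obtain ⟨t, ht⟩ : ∃ t, (k + 1) * j = t + k :=
    ⟨(k + 1) * j - k, by have : k * 1 ≤ k * j := Nat.mul_le_mul_left k hj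
                         have : (k + 1) * j = k * j + j := by ring
                         omega⟩
  have hid : (X ^ (N + r + 1) * C c⁻¹ * ∑ i ∈ Finset.range j, e ^ i) * (C c * (1 - e))
      = X ^ (N + r + 1) - C ((-c⁻¹) ^ j) * (q ^ j * X ^ ((r + k + 1) * j + (N + r + 1))) := by
    have h1 := geom_sum_mul_neg e j
    have h2 : e ^ j = C ((-c⁻¹) ^ j) * q ^ j * X ^ ((r + k + 1) * j) := by
      rw [he, mul_pow, mul_pow, ← C_pow, ← pow_mul]
    calc _ = X ^ (N + r + 1) * (C c⁻¹ * C c) * ((∑ i ∈ Finset.range j, e ^ i) * (1 - e)) := by ring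
      _ = _ := by rw [h1, hCC, h2, pow_add _ ((r + k + 1) * j)]; ring
  have hidx : f (-m + ((r + k + 1) * j + (N + r + 1) : ℕ)) = (T ^ t) (f ((r * j : ℕ) : ℤ)) := by
    rw [aux_shift T f hshift]
    congr 1
    have ht' : ((k : ℤ) + 1) * j = t + k := by exact_mod_cast ht
    rw [← hr]; push_cast; linear_combination ht'
  have hk : f (-m + (N + r + 1 : ℕ)) = f (-(k : ℤ)) := by
    congr 1; rw [← hr]; push_cast; ring
  rw [← ContinuousLinearMap.mul_apply, ← map_mul, hid, map_sub, ContinuousLinearMap.sub_apply,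
    map_pow, aeval_X, aux_shift T f hshift, hk, sub_sub_cancel_left, norm_neg, map_mul, map_mul,
    map_pow (aeval T) q, map_pow (aeval T) X, aeval_X, aeval_C, Algebra.algebraMap_eq_smul_one,
    ContinuousLinearMap.mul_apply, ContinuousLinearMap.mul_apply, ContinuousLinearMap.smul_apply,
    ContinuousLinearMap.one_apply, aux_shift T f hshift, hidx, norm_smul, norm_pow, norm_neg,
    norm_inv, hcn]
  have hF0 : 0 ≤ F := norm_nonneg _
  have hFj : (F ^ ((j : ℝ)⁻¹)) ^ j = F := Real.rpow_inv_natCast_pow hF0 (by omega)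
  have hb : ‖(aeval T q ^ j) ((T ^ t) (f ((r * j : ℕ) : ℤ)))‖ ≤ K ^ j * F := by
    calc _ ≤ ‖aeval T q‖ ^ j * ‖(T ^ t) (f ((r * j : ℕ) : ℤ))‖ := aux_pow_norm _ _ _
      _ ≤ ‖aeval T q‖ ^ j * (‖T‖ ^ t * F) := by gcongr; exact aux_pow_norm _ _ _
      _ ≤ ‖aeval T q‖ ^ j * ((‖T‖ + 1) ^ t * F) := by gcongr; linarith
      _ ≤ ‖aeval T q‖ ^ j * ((‖T‖ + 1) ^ ((k + 1) * j) * F) := by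
          gcongr
          · linarith [norm_nonneg T]
          · omega
      _ = _ := by rw [hK, mul_pow, pow_mul]; ring
  clear_value K
  set u : ℝ := K / ε * (G * F ^ ((j : ℝ)⁻¹)) with hu
  have hu0 : 0 ≤ u := by positivity
  have hu1 : u ≤ min η 1 / 2 := by
    calc u ≤ K / ε * δ := mul_le_mul_of_nonneg_left hlt.le (by positivity)
      _ = (K / (K + 1)) * (min η 1 / 2) := by rw [hδ]; field_simp
      _ ≤ 1 * (min η 1 / 2) := by
        gcongr
        rw [div_le_one (by linarith)]; linarith
      _ = _ := one_mul _
  calc ((ε / G)⁻¹) ^ j * ‖(aeval T q ^ j) ((T ^ t) (f ((r * j : ℕ) : ℤ)))‖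
      ≤ ((ε / G)⁻¹) ^ j * (K ^ j * F) := by gcongr
    _ = u ^ j := by
        rw [hu, mul_pow, mul_pow G, hFj, div_pow, inv_div, div_pow]; ring
    _ ≤ u := pow_le_of_le_one hu0 (by linarith [min_le_right η 1]) (by omega)
    _ < η := by linarith [min_le_left η 1]

/-- **Proposition 3.** Let `(f_j)_{j ∈ ℤ}` be a sequence in a Banach space `B` with dense
span and `T f_j = f_{j+1}`.  If for every positive integer `a`,
`inf { ‖f_{−m}‖ ⬝ ‖f_{(m−a)j}‖^{1/j} : j ≥ 1, m ≥ a } = 0`, then the set of cyclic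
vectors for `T` is dense in `B`. -/
theorem dense_cyclicVectors_of_inf_eq_zero
    {B : Type*} [NormedAddCommGroup B] [NormedSpace ℂ B] [CompleteSpace B]
    (T : B →L[ℂ] B) (f : ℤ → B)
    (hdense : Dense (↑(Submodule.span ℂ (Set.range f)) : Set B))
    (hshift : ∀ j : ℤ, T (f j) = f (j + 1))
    (hinf : ∀ a : ℕ, 1 ≤ a →
      sInf {x : ℝ | ∃ (j : ℕ) (m : ℤ), 1 ≤ j ∧ (a : ℤ) ≤ m ∧
        x = ‖f (-m)‖ * ‖f ((m - a) * j)‖ ^ ((j : ℝ)⁻¹)} = 0) :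
    Dense {x : B | CyclicVector T x} := by
  have hU : Dense (⋂ s : ℕ × ℕ, {x : B | ∃ p : Polynomial ℂ,
      ‖Polynomial.aeval T p x - f (-(s.1 : ℤ))‖ < 1 / ((s.2 : ℝ) + 1)}) := by
    apply dense_iInter_of_isOpen
    · rintro ⟨k, n⟩
      simp only [Set.setOf_exists]
      refine isOpen_iUnion fun p => isOpen_lt ?_ continuous_const
      fun_prop
    · rintro ⟨k, n⟩
      rw [Metric.dense_iff]
      intro x ε hε
      obtain ⟨y, hy, hyx⟩ := Metric.dense_iff.mp hdense x (ε / 2) (half_pos hε)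
      obtain ⟨N, q, rfl⟩ := aux_span T f hshift _ hyx
      obtain ⟨z, p, hz, hp⟩ := aux_key T f hshift hinf q N k (ε / 4) (1 / ((n : ℝ) + 1))
        (by positivity) (by positivity)
      refine ⟨z, ?_, p, hp⟩
      rw [Metric.mem_ball] at hy ⊢
      rw [← dist_eq_norm] at hz
      linarith [dist_triangle z (Polynomial.aeval T q (f (-(N : ℤ)))) x]
  refine hU.mono fun x hx => ?_
  simp only [Set.mem_iInter, Set.mem_setOf_eq] at hx
  set S := Submodule.span ℂ (Set.range fun n : ℕ => (T ^ n) x) with hS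
  have h1 : ∀ k : ℕ, f (-(k : ℤ)) ∈ S.topologicalClosure := by
    intro k
    change _ ∈ closure (S : Set B)
    rw [Metric.mem_closure_iff]
    intro ε hε
    obtain ⟨n, hn⟩ := exists_nat_one_div_lt hε
    obtain ⟨p, hp⟩ := hx (k, n)
    refine ⟨_, aux_aeval_mem T p x, ?_⟩
    rw [dist_comm, dist_eq_norm]
    exact hp.trans hn
  have h2 : ∀ n : ℕ, ∀ y ∈ S.topologicalClosure, (T ^ n) y ∈ S.topologicalClosure := by
    intro n y hy
    refine map_mem_closure (T ^ n).continuous hy ?_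
    intro z hz
    have hle : S ≤ S.comap ((T ^ n : B →L[ℂ] B) : B →ₗ[ℂ] B) := by
      conv_lhs => rw [hS]
      rw [Submodule.span_le]
      rintro _ ⟨i, rfl⟩
      refine Submodule.subset_span ⟨n + i, ?_⟩
      change (T ^ (n + i)) x = (T ^ n) ((T ^ i) x)
      rw [pow_add]; rfl
    exact hle hz
  have h3 : Submodule.span ℂ (Set.range f) ≤ S.topologicalClosure := by
    rw [Submodule.span_le]
    rintro _ ⟨j, rfl⟩
    have := h2 (j + (-j).toNat).toNat _ (h1 (-j).toNat)
    rw [aux_shift T f hshift] at this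
    have hj : -((-j).toNat : ℤ) + ((j + (-j).toNat).toNat : ℤ) = j := by omega
    rwa [hj] at this
  change Dense (S : Set B)
  have h4 : Dense (closure (S : Set B)) := hdense.mono h3
  exact dense_closure.mp h4
end
end
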